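/- arXiv:1910.02875 — 2 statements merged into one kernel-verified Lean document; each statement's English description precedes it below -/
import Mathlib

section
/- Let A and B be real symmetric n×n matrices with A·B = 0, and let λ be a nonzero real number. Then the λ-eigenspace of A + B is the internal direct sum of the λ-eigenspace of A and the λ-eigenspace of B; that is, ker(A + B − λ·Id) = ker(A − λ·Id) ⊕ ker(B − λ·Id), these two subspaces intersecting only in 0. Consequently the nonzero eigenvalues of A + B are exactly the union of the nonzero eigenvalues of A and of B. -/
/-!
Transposing `A * B = 0` and using symmetry gives `B * A = 0`, so `A` and `B` annihilate each other
on both sides. If `(A + B) v = μ v`, then applying `A` gives `A (A v) = μ (A v)`, so `A v` is in the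
`μ`-eigenspace of `A`, likewise `B v` in that of `B`, and `v = μ⁻¹ (A v) + μ⁻¹ (B v)`. Conversely,
`A v = μ v` forces `μ (B v) = B (A v) = 0`, hence `B v = 0` and `(A + B) v = μ v`. The same
vanishing shows that a common `μ`-eigenvector of `A` and `B` satisfies `μ v = B v = 0`. The claim on
eigenvalues follows since a supremum of two subspaces is zero only if both of them are.
-/

open Module.End in
/-- A nonzero-eigenvalue eigenvector of `f` is killed by `g` as soon as `g * f = 0`. -/
lemma apply_eq_zero_of_mem_eigenspace {K V : Type*} [Field K] [AddCommGroup V] [Module K V]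
    {f g : Module.End K V} (hgf : g * f = 0) {μ : K} (hμ : μ ≠ 0) {v : V}
    (hv : v ∈ eigenspace f μ) : g v = 0 := by
  have h : g (f v) = 0 := LinearMap.congr_fun hgf v
  rw [mem_eigenspace_iff.mp hv, map_smul] at h
  exact (smul_eq_zero.mp h).resolve_left hμ

open Module.End in
lemma eigenspace_add_eq_sup {K V : Type*} [Field K] [AddCommGroup V] [Module K V]
    {f g : Module.End K V} (hfg : f * g = 0) (hgf : g * f = 0) {μ : K} (hμ : μ ≠ 0) :
    eigenspace (f + g) μ = eigenspace f μ ⊔ eigenspace g μ := by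
  apply le_antisymm
  · intro v hv
    have hv' : f v + g v = μ • v := mem_eigenspace_iff.mp hv
    have hf : f v ∈ eigenspace f μ := by
      have h : f (g v) = 0 := LinearMap.congr_fun hfg v
      rw [mem_eigenspace_iff, ← map_smul, ← hv', map_add, h, add_zero]
    have hg : g v ∈ eigenspace g μ := by
      have h : g (f v) = 0 := LinearMap.congr_fun hgf v
      rw [mem_eigenspace_iff, ← map_smul, ← hv', map_add, h, zero_add]
    have hdecomp : v = μ⁻¹ • (f v + g v) := by rw [hv', inv_smul_smul₀ hμ]
    rw [hdecomp]
    exact Submodule.smul_mem _ _ (Submodule.add_mem_sup hf hg)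
  · refine sup_le (fun v hv => ?_) (fun v hv => ?_)
    · rw [mem_eigenspace_iff, LinearMap.add_apply, apply_eq_zero_of_mem_eigenspace hgf hμ hv,
        add_zero, mem_eigenspace_iff.mp hv]
    · rw [mem_eigenspace_iff, LinearMap.add_apply, apply_eq_zero_of_mem_eigenspace hfg hμ hv,
        zero_add, mem_eigenspace_iff.mp hv]

open Module.End in
lemma eigenspace_inf_eq_bot {K V : Type*} [Field K] [AddCommGroup V] [Module K V]
    {f g : Module.End K V} (hgf : g * f = 0) {μ : K} (hμ : μ ≠ 0) :
    eigenspace f μ ⊓ eigenspace g μ = ⊥ := by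
  refine (Submodule.eq_bot_iff _).mpr fun v hv => ?_
  have h := mem_eigenspace_iff.mp hv.2
  rw [apply_eq_zero_of_mem_eigenspace hgf hμ hv.1] at h
  exact (smul_eq_zero.mp h.symm).resolve_left hμ

lemma ker_sub_smul_one_mulVecLin {n : ℕ} (M : Matrix (Fin n) (Fin n) ℝ) (μ : ℝ) :
    LinearMap.ker ((M - μ • (1 : Matrix (Fin n) (Fin n) ℝ)).mulVecLin)
      = Module.End.eigenspace M.mulVecLin μ := by
  ext v
  rw [LinearMap.mem_ker, Module.End.mem_eigenspace_iff, Matrix.mulVecLin_apply,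
    Matrix.mulVecLin_apply, Matrix.sub_mulVec, Matrix.smul_mulVec, Matrix.one_mulVec, sub_eq_zero]

/-- If `A` and `B` are real symmetric `n×n` matrices with `A·B = 0`
and `λ ≠ 0`, then the `λ`-eigenspace of `A+B` is the internal direct sum of the
`λ`-eigenspaces of `A` and `B` (they intersect trivially), and consequently the
nonzero eigenvalues of `A+B` are exactly the union of those of `A` and of `B`. -/
theorem eigenspace_add_of_mul_eq_zero
    {n : ℕ} (A B : Matrix (Fin n) (Fin n) ℝ)
    (hA : A.IsSymm) (hB : B.IsSymm) (hAB : A * B = 0)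
    (lam : ℝ) (hlam : lam ≠ 0) :
    LinearMap.ker ((A + B - lam • (1 : Matrix (Fin n) (Fin n) ℝ)).mulVecLin)
      = LinearMap.ker ((A - lam • (1 : Matrix (Fin n) (Fin n) ℝ)).mulVecLin)
        ⊔ LinearMap.ker ((B - lam • (1 : Matrix (Fin n) (Fin n) ℝ)).mulVecLin) ∧
    LinearMap.ker ((A - lam • (1 : Matrix (Fin n) (Fin n) ℝ)).mulVecLin)
      ⊓ LinearMap.ker ((B - lam • (1 : Matrix (Fin n) (Fin n) ℝ)).mulVecLin) = ⊥ ∧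
    ∀ μ : ℝ, μ ≠ 0 →
      (Module.End.HasEigenvalue (Matrix.mulVecLin (A + B)) μ ↔
        Module.End.HasEigenvalue (Matrix.mulVecLin A) μ ∨
          Module.End.HasEigenvalue (Matrix.mulVecLin B) μ) := by
  have hBA : B * A = 0 := by
    simpa [Matrix.transpose_mul, hA.eq, hB.eq] using congrArg Matrix.transpose hAB
  have hfg : (A.mulVecLin * B.mulVecLin : Module.End ℝ (Fin n → ℝ)) = 0 := by
    rw [Module.End.mul_eq_comp, ← Matrix.mulVecLin_mul, hAB, Matrix.mulVecLin_zero]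
  have hgf : (B.mulVecLin * A.mulVecLin : Module.End ℝ (Fin n → ℝ)) = 0 := by
    rw [Module.End.mul_eq_comp, ← Matrix.mulVecLin_mul, hBA, Matrix.mulVecLin_zero]
  simp only [ker_sub_smul_one_mulVecLin, Matrix.mulVecLin_add]
  refine ⟨eigenspace_add_eq_sup hfg hgf hlam, eigenspace_inf_eq_bot hgf hlam, fun μ hμ => ?_⟩
  rw [Module.End.hasEigenvalue_iff, Module.End.hasEigenvalue_iff, Module.End.hasEigenvalue_iff,
    eigenspace_add_eq_sup hfg hgf hμ, ne_eq, sup_eq_bot_iff, not_and_or]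
end

section
/- Let Θ and Λ be real n×n matrices with Θ invertible, let D : ℝ → ℝ^n be continuous, and let Y, G : ℝ → ℝ^n be differentiable curves satisfying Y'(t) = −Θ·D(t) and G'(t) = −Λ·D(t) for all t. Then for all t, G(t) = G(0) + Λ·Θ^{−1}·(Y(t) − Y(0)). (This identity expresses the evolution of the first-moment vector G of the matrix S in terms of the evolution of the outputs Y during training.) -/
/-- If `Θ` is invertible, `D` is continuous, and `Y, G : ℝ → ℝⁿ`
satisfy `Y'(t) = −Θ·D(t)` and `G'(t) = −Λ·D(t)`, then
`G(t) = G(0) + Λ·Θ⁻¹·(Y(t) − Y(0))` for all `t`. -/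
theorem first_moment_evolution
    {n : ℕ} (Θ Lam : Matrix (Fin n) (Fin n) ℝ) (hΘ : IsUnit Θ.det)
    (D : ℝ → Fin n → ℝ) (hD : Continuous D)
    (Y G : ℝ → Fin n → ℝ)
    (hY : ∀ t : ℝ, HasDerivAt Y (-(Θ.mulVec (D t))) t)
    (hG : ∀ t : ℝ, HasDerivAt G (-(Lam.mulVec (D t))) t) :
    ∀ t : ℝ, G t = G 0 + (Lam * Θ⁻¹).mulVec (Y t - Y 0) := by
  -- The curve `G - Λ Θ⁻¹ Y` has derivative `-Λ D + Λ Θ⁻¹ Θ D = 0`, so it is constant.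
  have h_deriv : ∀ t : ℝ, HasDerivAt (fun s => G s - (Lam * Θ⁻¹).mulVec (Y s)) 0 t := by
    intro t
    have h := (Matrix.mulVecLin (Lam * Θ⁻¹)).toContinuousLinearMap.hasFDerivAt.comp_hasDerivAt t
      (hY t)
    have h_zero : -(Lam.mulVec (D t)) - (Lam * Θ⁻¹).mulVec (-(Θ.mulVec (D t))) = 0 := by
      rw [Matrix.mulVec_neg, Matrix.mulVec_mulVec, Matrix.nonsing_inv_mul_cancel_right _ _ hΘ,
        sub_self]
    rw [← h_zero]
    exact (hG t).sub h
  intro t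
  have h_const := is_const_of_deriv_eq_zero (fun s => (h_deriv s).differentiableAt)
    (fun s => (h_deriv s).deriv) t 0
  rw [Matrix.mulVec_sub, ← sub_eq_zero]
  rw [← sub_eq_zero] at h_const
  rw [← h_const]
  abel
end
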